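/- Let V be a finite set of variable indices with finite domains Dom_i (i ∈ V), and let I be a finite index set. For each α ∈ I let S_α ⊆ V with |S_α| ≥ 2, let M_α ⊆ Π_{i∈S_α} Dom_i be a matching, and fix ℓ_α ∈ S_α. For i ∈ S_α∖{ℓ_α} define W^α_i = Dom_i ∖ π_i(M_α) and M_α^{(j)} = π_{{ℓ_α,j}}(M_α) ⊆ Dom_{ℓ_α} × Dom_j for j ∈ S_α∖{ℓ_α}. Then for every x ∈ Π_{i∈V} Dom_i, the conjunction ∀ α ∈ I, x|_{S_α} ∉ M_α holds if and only if there exists t ∈ Π_{α∈I} S_α such that: (i) for every α with t_α ≠ ℓ_α, x_{t_α} ∈ W^α_{t_α}; and (ii) for every α with t_α = ℓ_α, there exists y : S_α∖{ℓ_α} → Dom_{ℓ_α} with (y_j, x_j) ∈ M_α^{(j)} for all j ∈ S_α∖{ℓ_α} and ¬(∀ j ∈ S_α∖{ℓ_α}, y_j = x_{ℓ_α}). In particular, the conjunction of negated matchings is equivalent to a disjunction of Π_{α∈I} |S_α| such positive formulas; consequently, if each negated relation R_S of arity |S| and degree at most d_S is decomposed into at most |S|(d_S−1)+1 matchings, the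 number of disjuncts is at most Π_S |S|^{|S|(d_S−1)+1}. -/

import Mathlib

/-- A relation `M ⊆ Π_{i∈S} Dom i` is a matching if any two of its tuples are
either equal or differ in every coordinate. -/
def IsMatching {S : Type*} {Dom : S → Type*} (M : Set ((i : S) → Dom i)) : Prop :=
  ∀ x ∈ M, ∀ y ∈ M, x = y ∨ ∀ i, x i ≠ y i

/-- Untangling a conjunction of negated matchings into a disjunction of positive
formulas.  For each `α ∈ I`, `Mα α` is a matching on the coordinates `Sα α ⊆ V`
(with `|Sα α| ≥ 2`) and `ℓ α ∈ Sα α` is fixed.  Then `x` avoids all the matchings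
iff there is a choice `t ∈ Π_α Sα α` such that for each `α`: if `t α ≠ ℓ α` then
`x (t α)` lies in `W^α_{t α} = Dom ∖ π_{t α}(Mα α)`, and if `t α = ℓ α` then there
is `y : Sα α ∖ {ℓ α} → Dom (ℓ α)` with `(y j, x j) ∈ π_{ℓ α, j}(Mα α)` for all
`j ≠ ℓ α` and not all `y j` equal to `x (ℓ α)`.  The disjunction ranges over the
`Π_α |Sα α|` choices of `t`. -/
theorem untangle_conjunction_of_negated_matchings
    {V : Type*} [Fintype V] [DecidableEq V] {Dom : V → Type*}
    {I : Type*} [Fintype I] [DecidableEq I]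
    (Sα : I → Finset V) (hcard : ∀ α, 2 ≤ (Sα α).card)
    (Mα : (α : I) → Set ((i : {i // i ∈ Sα α}) → Dom i.1))
    (hM : ∀ α, IsMatching (Mα α))
    (ℓ : (α : I) → {i // i ∈ Sα α}) :
    (∀ x : (v : V) → Dom v,
      (∀ α : I, (fun i : {i // i ∈ Sα α} => x i.1) ∉ Mα α) ↔
      (∃ t : (α : I) → {i // i ∈ Sα α},
        ∀ α : I,
          (t α ≠ ℓ α → ∀ m ∈ Mα α, m (t α) ≠ x (t α).1) ∧
          (t α = ℓ α →
            ∃ y : {i // i ∈ Sα α} → Dom (ℓ α).1,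
              (∀ j : {i // i ∈ Sα α}, j ≠ ℓ α →
                ∃ m ∈ Mα α, m (ℓ α) = y j ∧ m j = x j.1) ∧
              ¬ (∀ j : {i // i ∈ Sα α}, j ≠ ℓ α → y j = x (ℓ α).1)))) ∧
    Fintype.card ((α : I) → {i // i ∈ Sα α}) = ∏ α : I, (Sα α).card := by
  classical
  refine ⟨fun x => ⟨fun h => ?_, ?_⟩, by simp⟩
  · have key : ∀ α : I, ∃ t : {i // i ∈ Sα α},
          (t ≠ ℓ α → ∀ m ∈ Mα α, m t ≠ x t.1) ∧
          (t = ℓ α →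
            ∃ y : {i // i ∈ Sα α} → Dom (ℓ α).1,
              (∀ j : {i // i ∈ Sα α}, j ≠ ℓ α →
                ∃ m ∈ Mα α, m (ℓ α) = y j ∧ m j = x j.1) ∧
              ¬ (∀ j : {i // i ∈ Sα α}, j ≠ ℓ α → y j = x (ℓ α).1)) := by
      intro α
      by_cases hex : ∃ i : {i // i ∈ Sα α}, i ≠ ℓ α ∧ ∀ m ∈ Mα α, m i ≠ x i.1
      · obtain ⟨i, hi, hm⟩ := hex
        exact ⟨i, fun _ => hm, fun h' => absurd h' hi⟩
      · have hex' : ∀ i : {i // i ∈ Sα α}, i ≠ ℓ α → ∃ m ∈ Mα α, m i = x i.1 := by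
          intro i hi
          by_contra hc
          exact hex ⟨i, hi, fun m hm he => hc ⟨m, hm, he⟩⟩
        choose f hf hfx using hex'
        refine ⟨ℓ α, fun h' => absurd rfl h', fun _ =>
          ⟨fun j => if hj : j ≠ ℓ α then f j hj (ℓ α) else x (ℓ α).1, ?_, ?_⟩⟩
        · intro j hj
          exact ⟨f j hj, hf j hj, by simp [hj], hfx j hj⟩
        · intro hall
          have hall' : ∀ j (hj : j ≠ ℓ α), f j hj (ℓ α) = x (ℓ α).1 := by
            intro j hj
            have := hall j hj
            simpa [hj] using this
          obtain ⟨k, hk, hne⟩ := Finset.exists_mem_ne (hcard α) (ℓ α).1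
          have hk' : (⟨k, hk⟩ : {i // i ∈ Sα α}) ≠ ℓ α := fun e => hne (congrArg Subtype.val e)
          apply h α
          have heq : (fun i : {i // i ∈ Sα α} => x i.1) = f ⟨k, hk⟩ hk' := by
            funext j
            by_cases hj : j = ℓ α
            · subst hj
              exact (hall' _ hk').symm
            · rcases hM α _ (hf j hj) _ (hf _ hk') with e | e
              · rw [← e]
                exact (hfx j hj).symm
              · exact absurd ((hall' j hj).trans (hall' _ hk').symm) (e (ℓ α))
          rw [heq]
          exact hf _ hk'
    choose t ht using key
    exact ⟨t, ht⟩
  · rintro ⟨t, ht⟩ α hx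
    by_cases htα : t α = ℓ α
    · obtain ⟨y, hy, hn⟩ := (ht α).2 htα
      apply hn
      intro j hj
      obtain ⟨m, hm, h1, h2⟩ := hy j hj
      rcases hM α _ hm _ hx with e | e
      · rw [← h1, e]
      · exact absurd h2 (e j)
    · exact (ht α).1 htα _ hx rfl
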